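/- Let $(\mathfrak{a}, \mathfrak{m})$ be a complete local ring and $f = f_0 + f_1 X + \cdots + f_d X^d \in \mathfrak{a}[X]$ a polynomial not all of whose coefficients lie in $\mathfrak{m}$. Let $k$ be the largest index with $f_k \notin \mathfrak{m}$. Then there exist a monic polynomial $q \in \mathfrak{a}[X]$ of degree $k$ and a polynomial $u = u_0 + u_1 X + \cdots + u_{d-k} X^{d-k} \in \mathfrak{a}[X]$ with $u_0 \notin \mathfrak{m}$ and $u_i \in \mathfrak{m}$ for all $i \geq 1$, such that $f = u q$. -/

import Mathlib

open Polynomial IsLocalRing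

/-!
Put `d = natDegree f` and `n = d - K`. The reversed polynomial `g = X ^ d f(1 / X)` has its
coefficients below `n` in the ideal `I` and its `n`-th coefficient a unit, so it can serve as a
divisor in Weierstrass division over the power series ring. Dividing `X ^ n` by it gives
`X ^ n = g q + r`, and `P = X ^ n - r = g q` is a distinguished polynomial of degree `n`. Euclidean
division `g = P h + s` in the polynomial ring then reads `g (1 - q h) = s`, a Weierstrass division
of `0`, so `s = 0` and `q h = 1` by uniqueness. Hence `g = P h` with `h` a polynomial whose constant
coefficient is a unit; reversing back and rescaling by that unit turns `P` and `h` into the two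
factors of `f`.
-/

section Reverse

variable {R : Type*} [Semiring R]

theorem eq_reverse_mul_reflect_of_reverse_eq_mul {f P h : R[X]} {K : ℕ}
    (hf : f.natDegree = P.natDegree + K) (hh : h.natDegree ≤ K) (hfPh : f.reverse = P * h) :
    f = P.reverse * h.reflect K := by
  rw [reverse, ← reflect_mul P h le_rfl hh, ← hfPh, ← hf, reverse, reflect_reflect]

theorem natDegree_reflect_eq {h : R[X]} {K : ℕ} (hdeg : h.natDegree ≤ K) (h₀ : h.coeff 0 ≠ 0) :
    (h.reflect K).natDegree = K :=
  natDegree_eq_of_le_of_coeff_ne_zero (natDegree_reflect_le.trans (max_le le_rfl hdeg))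
    (by rwa [coeff_reflect, revAt_le le_rfl, Nat.sub_self])

theorem leadingCoeff_reflect_eq {h : R[X]} {K : ℕ} (hdeg : h.natDegree ≤ K) (h₀ : h.coeff 0 ≠ 0) :
    (h.reflect K).leadingCoeff = h.coeff 0 := by
  rw [leadingCoeff, natDegree_reflect_eq hdeg h₀, coeff_reflect, revAt_le le_rfl, Nat.sub_self]

end Reverse

theorem coeff_reverse_mem_of_isWeaklyEisensteinAt {R : Type*} [CommSemiring R] {I : Ideal R}
    {P : R[X]} (hP : P.IsWeaklyEisensteinAt I) {i : ℕ} (hi : i ≠ 0) : P.reverse.coeff i ∈ I := by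
  rcases le_or_gt i P.natDegree with hle | hlt
  · rw [coeff_reverse, revAt_le hle]
    exact hP.mem (by lia)
  · rw [coeff_eq_zero_of_natDegree_lt (P.reverse_natDegree_le.trans_lt hlt)]
    exact I.zero_mem

section Preparation

variable {A : Type*} [CommRing A] {I : Ideal A}

theorem order_map_quotientMk_eq {g : PowerSeries A} {n : ℕ} (hn : PowerSeries.coeff n g ∉ I)
    (hlt : ∀ i < n, PowerSeries.coeff i g ∈ I) :
    (g.map (Ideal.Quotient.mk I)).order = n := by
  simpa [PowerSeries.order_eq_nat, Ideal.Quotient.eq_zero_iff_mem] using And.intro hn hlt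

theorem isDistinguishedAt_X_pow_sub {r : A[X]} {n : ℕ} (hdeg : r.degree < n)
    (hr : ∀ i < n, r.coeff i ∈ I) : (X ^ n - r).IsDistinguishedAt I where
  mem {i} hi := by
    have hle : (X ^ n - r).natDegree ≤ n := (natDegree_sub_le_of_le (natDegree_X_pow_le n)
      (natDegree_le_of_degree_le hdeg.le)).trans_eq (max_self n)
    have hin : i < n := hi.trans_le hle
    simpa [coeff_X_pow, hin.ne] using hr i hin
  monic := by
    nontriviality A
    exact (monic_X_pow n).sub_of_left (by rwa [degree_X_pow])

theorem exists_isDistinguishedAt_coe_eq_mul [IsAdicComplete I A] {g : PowerSeries A}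
    (hg : g.IsWeierstrassDivisorAt I) :
    ∃ (P : A[X]) (q : PowerSeries A), P.IsDistinguishedAt I ∧
      P.natDegree = (g.map (Ideal.Quotient.mk I)).order.toNat ∧ (P : PowerSeries A) = g * q := by
  set n := (g.map (Ideal.Quotient.mk I)).order.toNat
  have hdivision := hg.isWeierstrassDivisionAt_div_mod (PowerSeries.X ^ n)
  set r := hg.mod (PowerSeries.X ^ n)
  have hrmem (i : ℕ) (hi : i < n) : r.coeff i ∈ I := by
    simpa [PowerSeries.coeff_X_pow, hi.ne] using hdivision.coeff_f_sub_r_mem hi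
  refine ⟨X ^ n - r, hg.div (PowerSeries.X ^ n),
    isDistinguishedAt_X_pow_sub hdivision.degree_lt hrmem, ?_, ?_⟩
  · rcases subsingleton_or_nontrivial A with _ | _
    · simp [n, Subsingleton.elim g 0, natDegree_of_subsingleton]
    · have hrdeg : r.degree < (X ^ n : A[X]).degree := by
        simpa only [degree_X_pow] using hdivision.degree_lt
      rw [natDegree_eq_of_degree_eq (degree_sub_eq_left_of_degree_lt hrdeg), natDegree_X_pow]
  · rw [coe_sub, coe_pow, coe_X, sub_eq_iff_eq_add]
    exact hdivision.eq_mul_add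

theorem mul_divByMonic_eq_one_and_modByMonic_eq_zero [IsHausdorff I A] {g P : A[X]}
    {q : PowerSeries A} (hg : (g : PowerSeries A).IsWeierstrassDivisorAt I) (hP : P.Monic)
    (hdeg : P.natDegree ≤ ((g : PowerSeries A).map (Ideal.Quotient.mk I)).order.toNat)
    (hPq : (P : PowerSeries A) = g * q) :
    q * (g /ₘ P : A[X]) = 1 ∧ g %ₘ P = 0 := by
  rcases subsingleton_or_nontrivial A with _ | _
  · exact ⟨Subsingleton.elim _ _, Subsingleton.elim _ _⟩
  have hmod : (g %ₘ P).degree < ((g : PowerSeries A).map (Ideal.Quotient.mk I)).order.toNat :=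
    (degree_modByMonic_lt g hP).trans_le (degree_le_of_natDegree_le hdeg)
  have hdiv : (g : PowerSeries A) = (g %ₘ P : A[X]) + g * q * (g /ₘ P : A[X]) := by
    rw [← hPq, ← coe_mul, ← coe_add, modByMonic_add_div]
  obtain ⟨hq, hr⟩ := hg.eq_zero_of_mul_eq (q := 1 - q * (g /ₘ P : A[X])) hmod (by
    linear_combination hdiv)
  exact ⟨(sub_eq_zero.1 hq).symm, hr⟩

theorem exists_isDistinguishedAt_mul_eq [Nontrivial A] [IsAdicComplete I A] {g : A[X]} {n : ℕ}
    (hn : IsUnit (g.coeff n)) (hlt : ∀ i < n, g.coeff i ∈ I) :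
    ∃ P h : A[X], P.IsDistinguishedAt I ∧ P.natDegree = n ∧ IsUnit (h.coeff 0) ∧ g = P * h := by
  have hI : I ≠ ⊤ := by
    rintro rfl
    exact not_subsingleton A (IsHausdorff.subsingleton ‹IsAdicComplete ⊤ A›.toIsHausdorff)
  have horder : ((g : PowerSeries A).map (Ideal.Quotient.mk I)).order.toNat = n := by
    rw [order_map_quotientMk_eq (n := n), ENat.toNat_natCast]
    · simpa only [coeff_coe] using fun hmem ↦ hI (I.eq_top_of_isUnit_mem hmem hn)
    · simpa only [coeff_coe] using hlt
  have hg : (g : PowerSeries A).IsWeierstrassDivisorAt I := by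
    rwa [PowerSeries.IsWeierstrassDivisorAt, horder, coeff_coe]
  obtain ⟨P, q, hP, hPdeg, hPq⟩ := exists_isDistinguishedAt_coe_eq_mul hg
  obtain ⟨hunit, hmod⟩ := mul_divByMonic_eq_one_and_modByMonic_eq_zero hg hP.monic hPdeg.le hPq
  refine ⟨P, g /ₘ P, hP, hPdeg.trans horder, ?_, ?_⟩
  · rw [← coeff_coe, PowerSeries.coeff_zero_eq_constantCoeff_apply]
    exact (IsUnit.of_mul_eq_one_right _ hunit).map PowerSeries.constantCoeff
  · conv_lhs => rw [← modByMonic_add_div g P, hmod, zero_add]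

theorem exists_isDistinguishedAt_eq_reverse_mul [Nontrivial A] [IsAdicComplete I A] {f : A[X]}
    {K : ℕ} (hK : IsUnit (f.coeff K)) (hK' : ∀ i, K < i → f.coeff i ∈ I) :
    ∃ P p : A[X], P.IsDistinguishedAt I ∧ p.natDegree = K ∧ IsUnit p.leadingCoeff ∧
      f = P.reverse * p := by
  have hKf : K ≤ f.natDegree := le_natDegree_of_ne_zero hK.ne_zero
  have hcoeff : IsUnit (f.reverse.coeff (f.natDegree - K)) := by
    rwa [coeff_reverse, revAt_le (by lia), Nat.sub_sub_self hKf]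
  have hcoeff_mem (i : ℕ) (hi : i < f.natDegree - K) : f.reverse.coeff i ∈ I := by
    rw [coeff_reverse, revAt_le (by lia)]
    exact hK' _ (by lia)
  obtain ⟨P, h, hP, hPdeg, hh₀, hPh⟩ := exists_isDistinguishedAt_mul_eq hcoeff hcoeff_mem
  have hfdeg : f.natDegree = P.natDegree + K := by rw [hPdeg, Nat.sub_add_cancel hKf]
  have hhdeg : h.natDegree ≤ K := by
    have hle := f.reverse_natDegree_le
    rw [hPh, hP.monic.natDegree_mul' (fun h0 ↦ by simp [h0] at hh₀)] at hle
    lia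
  exact ⟨P, h.reflect K, hP, natDegree_reflect_eq hhdeg hh₀.ne_zero,
    leadingCoeff_reflect_eq hhdeg hh₀.ne_zero ▸ hh₀,
    eq_reverse_mul_reflect_of_reverse_eq_mul hfdeg hhdeg hPh⟩

end Preparation

theorem stmt_6_general {A : Type*} [CommRing A] [Nontrivial A] (I : Ideal A) [IsAdicComplete I A]
    (f : A[X]) (K : ℕ) (hK : IsUnit (f.coeff K)) (hK' : ∀ i, K < i → f.coeff i ∈ I) :
    ∃ q u : A[X],
      q.Monic ∧ q.natDegree = K ∧
      u.natDegree = f.natDegree - K ∧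
      IsUnit (u.coeff 0) ∧
      (∀ i, 1 ≤ i → u.coeff i ∈ I) ∧
      f = u * q := by
  obtain ⟨P, p, hP, hpdeg, hp, hf⟩ := exists_isDistinguishedAt_eq_reverse_mul hK hK'
  set q := hp.unit⁻¹ • p
  set u := hp.unit • P.reverse
  have hq : q.Monic := monic_of_isUnit_leadingCoeff_inv_smul hp
  have hqdeg : q.natDegree = K :=
    (natDegree_smul_of_smul_regular p (isSMulRegular_of_group _)).trans hpdeg
  have hu₀ : IsUnit (u.coeff 0) := by
    rw [coeff_smul, coeff_zero_reverse, hP.monic.leadingCoeff, Units.smul_def, smul_eq_mul, mul_one]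
    exact hp.unit.isUnit
  have hu (i : ℕ) (hi : 1 ≤ i) : u.coeff i ∈ I := by
    rw [coeff_smul]
    exact I.smul_of_tower_mem hp.unit
      (coeff_reverse_mem_of_isWeaklyEisensteinAt hP.toIsWeaklyEisensteinAt (by lia))
  have hfuq : f = u * q := by rw [smul_mul_smul_comm, mul_inv_cancel, one_smul, hf]
  have hudeg : u.natDegree = f.natDegree - K := by
    have hu_ne : u ≠ 0 := fun h0 ↦ by simp [h0] at hu₀
    rw [hfuq, mul_comm, hq.natDegree_mul' hu_ne, hqdeg, Nat.add_sub_cancel_left]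
  exact ⟨q, u, hq, hqdeg, hudeg, hu₀, hu, hfuq⟩

/-- Weierstrass preparation for polynomials, existence. -/
theorem stmt_6 (A : Type*) [CommRing A] [IsLocalRing A]
    [IsAdicComplete (maximalIdeal A) A]
    (f : A[X]) (K : ℕ)
    (hK : f.coeff K ∉ maximalIdeal A)
    (hK' : ∀ i, K < i → f.coeff i ∈ maximalIdeal A) :
    ∃ q u : A[X],
      q.Monic ∧ q.natDegree = K ∧
      u.natDegree ≤ f.natDegree - K ∧
      u.coeff 0 ∉ maximalIdeal A ∧
      (∀ i, 1 ≤ i → u.coeff i ∈ maximalIdeal A) ∧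
      f = u * q := by
  obtain ⟨q, u, hq, hqdeg, hudeg, hu₀, hu, hf⟩ :=
    stmt_6_general (maximalIdeal A) f K (notMem_maximalIdeal.1 hK) hK'
  exact ⟨q, u, hq, hqdeg, hudeg.le, notMem_maximalIdeal.2 hu₀, hu, hf⟩
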